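/- arXiv:1708.06054 — 2 statements merged into one kernel-verified Lean document; each statement's English description precedes it below -/
import Mathlib

section
/- With A = (0^{21},4,0,−4) and B = (0^{21},0,4,−4) in the Leech lattice, the 891 points of T_{AB} consist of: 1 vector of type (0^{21},4,4,0); 42 vectors of type (0^{20}(±4)^1,0,0,−4); 336 vectors of type (0^{16}(±2)^5,2,2,−2); and 512 vectors of type ((±1)^{21},1,1,−3). -/
open scoped BigOperators

/-- A generator matrix of the extended binary Golay code (MOG coordinates). -/
def golayMatrix : Matrix (Fin 12) (Fin 24) (ZMod 2) :=
  !![0, 0, 0, 0, 0, 0, 0, 0, 0, 0, 0, 0, 0, 0, 0, 0, 1, 1, 1, 1, 1, 1, 1, 1;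
    0, 0, 0, 0, 0, 0, 0, 0, 0, 0, 0, 0, 1, 1, 1, 1, 0, 0, 0, 0, 1, 1, 1, 1;
    0, 0, 0, 0, 0, 0, 0, 0, 0, 0, 1, 1, 0, 0, 1, 1, 0, 0, 1, 1, 0, 0, 1, 1;
    0, 0, 0, 0, 0, 0, 0, 0, 0, 1, 0, 1, 0, 1, 0, 1, 0, 1, 0, 1, 0, 1, 0, 1;
    0, 0, 0, 0, 0, 0, 0, 0, 1, 0, 0, 1, 0, 1, 1, 0, 0, 1, 1, 0, 1, 0, 0, 1;
    0, 0, 0, 0, 0, 0, 1, 1, 0, 0, 0, 0, 0, 0, 1, 1, 0, 1, 1, 0, 0, 1, 0, 1;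
    0, 0, 0, 0, 0, 1, 0, 1, 0, 0, 0, 0, 0, 1, 0, 1, 0, 0, 1, 1, 0, 1, 1, 0;
    0, 0, 0, 0, 1, 0, 0, 1, 0, 0, 0, 0, 0, 1, 1, 0, 0, 1, 0, 1, 1, 1, 0, 0;
    0, 0, 0, 1, 0, 0, 0, 1, 0, 0, 0, 1, 0, 0, 0, 1, 0, 1, 1, 1, 1, 0, 0, 0;
    0, 0, 1, 0, 0, 0, 0, 1, 0, 0, 0, 1, 0, 0, 1, 0, 0, 0, 1, 0, 1, 1, 1, 0;
    0, 1, 0, 0, 0, 0, 0, 1, 0, 0, 0, 1, 0, 1, 0, 0, 0, 0, 0, 1, 1, 0, 1, 1;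
    1, 0, 0, 0, 0, 0, 0, 1, 0, 0, 0, 1, 0, 1, 1, 1, 0, 1, 0, 0, 0, 0, 1, 0]

/-- The extended binary Golay code `C₂₄`. -/
def GolayCode : Submodule (ZMod 2) (Fin 24 → ZMod 2) :=
  Submodule.span (ZMod 2) (Set.range fun i => golayMatrix i)

/-- Membership in the Leech lattice `Λ₂₄ ⊂ ℤ²⁴` (coordinates scaled by `√8`),
via the standard congruence characterization. -/
def IsLeech (x : Fin 24 → ℤ) : Prop :=
  ∃ m : ℤ, (m = 0 ∨ m = 1) ∧ (∀ i, (2:ℤ) ∣ (x i - m)) ∧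
    ((fun i => if (4:ℤ) ∣ (x i - m - 2) then (1 : ZMod 2) else 0) ∈ GolayCode) ∧
    (8:ℤ) ∣ ((∑ i, x i) - 4 * m)

/-- The inner product `⟨x, y⟩ = (Σ xᵢ yᵢ)/8` on the Leech lattice. -/
def leechInner (x y : Fin 24 → ℤ) : ℚ := (∑ i, (x i : ℚ) * (y i : ℚ)) / 8

/-- The lattice point `A = (0²¹, 4, 0, −4)`. -/
def vA : Fin 24 → ℤ := fun i => if i.val = 21 then 4 else if i.val = 23 then -4 else 0

/-- The lattice point `B = (0²¹, 0, 4, −4)`. -/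
def vB : Fin 24 → ℤ := fun i => if i.val = 22 then 4 else if i.val = 23 then -4 else 0

/-- `T_AB`: lattice points `T` with `|OT| = |AT| = |BT| = 2`. -/
def TAB : Set (Fin 24 → ℤ) :=
  {T | IsLeech T ∧ leechInner T T = 4 ∧
       leechInner (T - vA) (T - vA) = 4 ∧ leechInner (T - vB) (T - vB) = 4}

/-- Type 0: the vector `(0²¹, 4, 4, 0)`. -/
def IsType0 (T : Fin 24 → ℤ) : Prop :=
  T = fun i => if i.val = 21 ∨ i.val = 22 then 4 else 0

/-- Type 1: vectors `(0²⁰ (±4)¹, 0, 0, −4)`. -/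
def IsType1 (T : Fin 24 → ℤ) : Prop :=
  (∀ i : Fin 24, i.val < 21 → T i = 0 ∨ T i = 4 ∨ T i = -4) ∧
  Nat.card {i : Fin 24 // i.val < 21 ∧ T i ≠ 0} = 1 ∧
  T ⟨21, by omega⟩ = 0 ∧ T ⟨22, by omega⟩ = 0 ∧ T ⟨23, by omega⟩ = -4

/-- Type 2: vectors `(0¹⁶ (±2)⁵, 2, 2, −2)`. -/
def IsType2 (T : Fin 24 → ℤ) : Prop :=
  (∀ i : Fin 24, i.val < 21 → T i = 0 ∨ T i = 2 ∨ T i = -2) ∧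
  Nat.card {i : Fin 24 // i.val < 21 ∧ T i ≠ 0} = 5 ∧
  T ⟨21, by omega⟩ = 2 ∧ T ⟨22, by omega⟩ = 2 ∧ T ⟨23, by omega⟩ = -2

/-- Type 3: vectors `((±1)²¹, 1, 1, −3)`. -/
def IsType3 (T : Fin 24 → ℤ) : Prop :=
  (∀ i : Fin 24, i.val < 21 → T i = 1 ∨ T i = -1) ∧
  T ⟨21, by omega⟩ = 1 ∧ T ⟨22, by omega⟩ = 1 ∧ T ⟨23, by omega⟩ = -3


/-- Decode the low 24 bits of a natural number as a binary vector. -/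
def dec (n : ℕ) : Fin 24 → ZMod 2 := fun i => if n.testBit i.val then 1 else 0

/-- All xor-combinations of a list of masks. -/
def gen : List ℕ → List ℕ
  | [] => [0]
  | r :: L => gen L ++ (gen L).map (fun n => r ^^^ n)

/-- The rows of the Golay generator matrix as bit masks. -/
def rowMasks : List ℕ := [16711680, 15790080, 13421568, 11184640, 9857280, 10928320, 7119008, 3825808, 2001032, 7620740, 14166146, 4384897]

/-- The Golay codewords as bit masks. -/
def cw : List ℕ := gen rowMasks

/-- The first 21 coordinates. -/
def U : Finset (Fin 24) := Finset.univ.filter fun i => i.val < 21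

/-- Weight on the first 21 coordinates. -/
def wt (n : ℕ) : ℕ := (U.filter fun i => n.testBit i.val = true).card

lemma dec_xor (a b : ℕ) : dec (a ^^^ b) = dec a + dec b := by
  funext i
  simp only [dec, Nat.testBit_xor, Pi.add_apply]
  cases a.testBit i.val <;> cases b.testBit i.val <;> decide

lemma dec_zero : dec 0 = 0 := by
  funext i
  simp [dec]

lemma mem_span_gen (L : List ℕ) (x : Fin 24 → ZMod 2) :
    x ∈ Submodule.span (ZMod 2) {y | ∃ r ∈ L, dec r = y} ↔ ∃ n ∈ gen L, dec n = x := by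
  induction L generalizing x with
  | nil => simp [gen, dec_zero, eq_comm]
  | cons r L ih =>
    have h : {y | ∃ r' ∈ r :: L, dec r' = y} = insert (dec r) {y | ∃ r ∈ L, dec r = y} := by
      ext y
      simp [eq_comm]
    rw [h, Submodule.mem_span_insert]
    constructor
    · rintro ⟨a, z, hz, rfl⟩
      obtain ⟨n, hn, rfl⟩ := (ih z).1 hz
      have ha : a = 0 ∨ a = 1 := by
        revert a
        decide
      rcases ha with rfl | rfl
      · exact ⟨n, by simp [gen, hn], by simp⟩
      · exact ⟨r ^^^ n, by simp only [gen, List.mem_append, List.mem_map]; exact Or.inr ⟨n, hn, rfl⟩,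
          by simp [dec_xor]⟩
    · rintro ⟨n, hn, rfl⟩
      simp only [gen, List.mem_append, List.mem_map] at hn
      rcases hn with hn | ⟨k, hk, rfl⟩
      · exact ⟨0, dec n, (ih _).2 ⟨n, hn, rfl⟩, by simp⟩
      · exact ⟨1, dec k, (ih _).2 ⟨k, hk, rfl⟩, by simp [dec_xor]⟩

/-- Entries of the Golay matrix, as a plain function. -/
def golayFn : Fin 12 → Fin 24 → ZMod 2 := fun i j => golayMatrix i j

lemma range_golay : (Set.range fun i => golayMatrix i) = {y | ∃ r ∈ rowMasks, dec r = y} := by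
  have h1 : ∀ (i : Fin 12) (j : Fin 24), dec (rowMasks.getD i.val 0) j = golayFn i j := by
    decide +kernel
  have h2 : rowMasks.length = 12 := by decide
  ext y
  constructor
  · rintro ⟨i, rfl⟩
    refine ⟨rowMasks.getD i.val 0, ?_, funext (h1 i)⟩
    rw [List.getD_eq_getElem _ _ (by rw [h2]; exact i.2)]
    exact List.getElem_mem _
  · rintro ⟨r, hr, rfl⟩
    obtain ⟨i, hi, rfl⟩ := List.getElem_of_mem hr
    refine ⟨⟨i, by omega⟩, ?_⟩
    funext j
    change golayFn _ j = _
    rw [← h1, List.getD_eq_getElem _ _ hi]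

lemma mem_golay (x : Fin 24 → ZMod 2) : x ∈ GolayCode ↔ ∃ n ∈ cw, dec n = x := by
  rw [GolayCode, range_golay, mem_span_gen, cw]

/-- Total weight, with the three last coordinates listed separately. -/
def wtAll (n : ℕ) : ℕ :=
  wt n + (n.testBit 21).toNat + (n.testBit 22).toNat + (n.testBit 23).toNat

/-- Check a predicate on all xor-combinations, by a recursion of small depth. -/
def allB (p : ℕ → Bool) : List ℕ → ℕ → Bool
  | [], a => p a
  | r :: L, a => allB p L a && allB p L (a ^^^ r)

lemma allB_spec (p : ℕ → Bool) (L : List ℕ) (a : ℕ) (h : allB p L a = true) :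
    ∀ n ∈ gen L, p (a ^^^ n) = true := by
  induction L generalizing a with
  | nil => simpa [gen, allB] using h
  | cons r L ih =>
    simp only [allB, Bool.and_eq_true] at h
    intro n hn
    simp only [gen, List.mem_append, List.mem_map] at hn
    rcases hn with hn | ⟨k, hk, rfl⟩
    · exact ih a h.1 n hn
    · rw [← Nat.xor_assoc]
      exact ih _ h.2 k hk

/-- Sum of the bits `0, …, k - 1`. -/
def bitSum (n : ℕ) : ℕ → ℕ
  | 0 => 0
  | k + 1 => bitSum n k + (n >>> k) % 2

lemma bitSum_eq (n k : ℕ) :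
    bitSum n k = ∑ i ∈ Finset.range k, (n.testBit i).toNat := by
  induction k with
  | zero => rfl
  | succ k ih => rw [bitSum, ih, Finset.sum_range_succ, Nat.toNat_testBit, Nat.shiftRight_eq_div_pow]

lemma U_sum {M : Type*} [AddCommMonoid M] (f : Fin 24 → M) :
    ∑ i, f i = ∑ i ∈ U, f i + f ⟨21, by omega⟩ + f ⟨22, by omega⟩ + f ⟨23, by omega⟩ := by
  have h : (Finset.univ : Finset (Fin 24)) = insert 23 (insert 22 (insert 21 U)) := by
    decide
  rw [h, Finset.sum_insert (by decide), Finset.sum_insert (by decide),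
    Finset.sum_insert (by decide)]
  change f 23 + (f 22 + (f 21 + _)) = _ + f 21 + f 22 + f 23
  abel

lemma wtAll_eq (n : ℕ) : wtAll n = bitSum n 24 := by
  have h : wt n = ∑ i ∈ U, (n.testBit i.val).toNat := by
    rw [wt, Finset.card_filter]
    exact Finset.sum_congr rfl fun i _ => by cases n.testBit i.val <;> rfl
  rw [bitSum_eq, ← Fin.sum_univ_eq_sum_range (fun i => (n.testBit i).toNat), U_sum, wtAll, h]

lemma cw_weight_aux : allB (fun n => bitSum n 24 == 0 || (bitSum n 24 % 4 == 0 && Nat.ble 8 (bitSum n 24)))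
    rowMasks 0 = true := by decide +kernel

lemma cw_weight (n : ℕ) (hn : n ∈ cw) : (wtAll n = 0 ∨ 8 ≤ wtAll n) ∧ wtAll n % 4 = 0 := by
  have h := allB_spec _ _ _ cw_weight_aux n hn
  rw [Nat.zero_xor, ← wtAll_eq] at h
  simp only [Bool.or_eq_true, Bool.and_eq_true, beq_iff_eq, Nat.ble_eq] at h
  omega

/-- Codewords vanishing at the last three coordinates. -/
def cw3 : List ℕ :=
  cw.filter fun n => !n.testBit 21 && !n.testBit 22 && !n.testBit 23

/-- Octads containing the last three coordinates. -/
def cw2 : List ℕ :=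
  cw.filter fun n => n.testBit 21 && n.testBit 22 && n.testBit 23 && (bitSum n 21 == 5)

/-- Vectors of type 2 as lists. -/
def L2 : List (List ℤ) := cw2.flatMap fun n =>
  ((List.ofFn fun i : Fin 24 => if i.val < 21 then (if n.testBit i.val then [2, -2] else [0])
    else if i.val < 23 then [2] else [(-2 : ℤ)]).sections).filter fun l => l.sum % 8 == 0

/-- Vectors of type 3 as lists. -/
def L3 : List (List ℤ) := cw3.map fun n =>
  List.ofFn fun i : Fin 24 => if i.val < 21 then (if n.testBit i.val then -1 else 1)
    else if i.val < 23 then 1 else (-3 : ℤ)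

/-- Vectors of type 1 as lists. -/
def L1 : List (List ℤ) := (List.finRange 21).flatMap fun k => [4, -4].map fun e =>
  List.ofFn fun i : Fin 24 => if i.val < 21 then (if i.val = k.val then e else 0)
    else if i.val < 23 then 0 else (-4 : ℤ)

/-- Encode a list of signs as a number. -/
def enc (l : List ℤ) : ℕ := l.foldl (fun a x => a * 3 + (if x = 0 then 0 else if x < 0 then 1 else 2)) 0

/-- The encodings of the type 2 vectors. -/
def lit2 : List ℕ := 
  [184799573332, 247561692550, 268482398956, 142958160520, 275455967758, 149931729322,
  170852435728, 233614554946, 278942752132, 153418513696, 174339220102, 237101339320,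
  181312788904, 244074908122, 264995614528, 139471376092, 33706686274, 63925484416, 65087214442,
  32543893366, 65087726200, 32544405124, 33706135150, 63924933292, 65087745154, 32544424078,
  33706154104, 63924952246, 33706665862, 63925464004, 65087194030, 32543872954, 94402640644,
  188416679308, 188545288030, 94272969040, 188545760422, 94273441432, 94402050154, 188416088818,
  188545819228, 94273500238, 94402108960, 188416147624, 94402581352, 188416620016, 188545228738,
  94272909748, 2281476292, 3056317270, 3314597596, 1764915640, 3400691038, 1851009082, 2109289408,
  2884130386, 3443737732, 1894055776, 2152336102, 2927177080, 2238429544, 3013270522, 3271550848,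
  1721868892, 10575264040, 20992570522, 21021268336, 10517868412, 21035558194, 10532158270,
  10560856084, 20978162566, 21035616514, 10532216590, 10560914404, 20978220886, 10575204262,
  20992510744, 21021208558, 10517808634, 4290363070, 7389726982, 7762798564, 3888593674,
  7777127788, 3902922898, 4275994480, 7375358392, 7777147228, 3902942338, 4276013920, 7375377832,
  4290343144, 7389707056, 7762778638, 3888573748, 31668051058, 62919970504, 63034761760,
  31524561988, 63049104106, 31538904334, 31653695590, 62905615036, 63049110586, 31538910814,
  31653702070, 62905621516, 31668044416, 62919963862, 63034755118, 31524555346, 94238877760,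
  188339009866, 188377273618, 94191048070, 188382036904, 94195811356, 94234075108, 188334207214,
  188382056506, 94195830958, 94234094710, 188334226816, 94238857996, 188338990102, 188377253854,
  94191028306, 12794455708, 22092547444, 23250025942, 11627411272, 23254802350, 11632187680,
  12789666178, 22087757914, 23254808668, 11632193998, 12789672496, 22087764232, 12794448904,
  22092540640, 23250019138, 11627404468, 5814614266, 8139137200, 9299804344, 4650758476,
  9301339618, 4652293750, 5812960894, 8137483828, 9301398586, 4652352718, 5813019862, 8137542796,
  5814555136, 8139078070, 9299745214, 4650699346, 94921223056, 188676981394, 189062807560,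
  94532208244, 189064395322, 94533796006, 94919622172, 188675380510, 189064401154, 94533801838,
  94919628004, 188675386342, 94921215766, 188676974104, 189062800270, 94532200954, 28166452,
  37732390, 40921036, 21789160, 41983918, 22852042, 26040688, 35606626, 42515332, 23383456,
  26572102, 36138040, 27634984, 37200922, 40389568, 21257692, 347812, 465910, 505276, 269080,
  518398, 282202, 321568, 439666, 524932, 288736, 328102, 446200, 341224, 459322, 498688, 262492,
  11236611544, 21309544258, 21696433306, 10848659614, 21696787600, 10849013908, 11235902956,
  21308835670, 21696964666, 10849190974, 11236080022, 21309012736, 11236434316, 21309367030,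
  21696256078, 10848482386, 3754986442, 7112630680, 7236987874, 3621063310, 7241593696,
  3625669132, 3750026326, 7107670564, 7241770114, 3625845550, 3750202744, 7107846982, 3754808566,
  7112452804, 7236809998, 3620885434, 31470696502, 62808709390, 62850161788, 31426055458,
  62851578964, 31427472634, 31468925032, 62806937920, 62851755868, 31427649538, 31469101936,
  62807114824, 31470519112, 62808532000, 62849984398, 31425878068, 4372, 5830, 6316, 3400, 6478,
  3562, 4048, 5506, 6532, 3616, 4102, 5560, 4264, 5722, 6208, 3292, 3573958246, 7017695926,
  7060211206, 3530380084, 7060736086, 3530904964, 3573420244, 7017157924, 7060740460, 3530909338,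
  3573424618, 7017162298, 3573949498, 7017687178, 7060202458, 3530371336, 32165589022,
  63159228142, 63541865662, 31773385564, 63546589582, 31778109484, 32160747004, 63154386124,
  63546646444, 31778166346, 32160803866, 63154442986, 32165527786, 63159166906, 63541804426,
  31773324328, 10721865940, 21053078980, 21180624820, 10591131454, 21182199460, 10592706094,
  10720251934, 21051464974, 21182216956, 10592723590, 10720269430, 21051482470, 10721844070,
  21053057110, 21180602950, 10591109584, 96496758268, 189477675628, 190625588188, 95320147894,
  190639759948, 95334319654, 96482232214, 189463149574, 190639934908, 95334494614, 96482407174,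
  189463324534, 96496578934, 189477496294, 190625408854, 95319968560]

/-- The encodings of the type 3 vectors. -/
def lit3 : List ℕ := 
  [282429536479, 278899166275, 176620669693, 173176406701, 271581145945, 268051851961,
  186693038215, 183249824875, 240415870363, 236971608343, 155613816709, 152083448449,
  250488317617, 247045105249, 144765583639, 141236291599, 156890351761, 153361058209,
  239367856399, 235924642519, 146043155491, 142512785827, 249441392617, 245997129193,
  177638936245, 174195724309, 281123227447, 277593934867, 187712314999, 184268053519,
  270275952445, 266745583753, 240582782041, 237053489785, 155694674635, 152251462375,
  250656213283, 247125845239, 144847347145, 141403085017, 282251956129, 278808742897,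
  176529222799, 172999928599, 271404786103, 267960523003, 186602732773, 183072362785,
  177806793031, 174276424447, 281205029833, 277760768137, 187879266529, 184349973841,
  270356770519, 266913558799, 156713953039, 153269689399, 239277589837, 235747220281,
  145865614993, 142422401329, 249349905871, 245820612211, 251003750263, 247559487163,
  145281029893, 141750659905, 240155530369, 236712317137, 155353464079, 151824169879,
  271838428027, 268308059983, 186950307661, 183506045533, 281910783481, 278381491225,
  176101930303, 172658718043, 188226816469, 184783602805, 270790440307, 267261146647,
  177379528399, 173935264759, 280863832237, 277333462681, 146299243957, 142769951269,
  249697493719, 246254281999, 156372793351, 152842424767, 238850284381, 235406022685,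
  271919168017, 268475955649, 187117101079, 183587809039, 281992664923, 278548402903,
  176269944229, 172739575969, 250912421305, 247383127321, 145103567803, 141660354463,
  240065106991, 236534736787, 155176985977, 151732722985, 146381164279, 142936902799,
  249865468765, 246335100073, 156453493489, 153010281553, 239017117651, 235487825071,
  188136431971, 184606062307, 270613923325, 267169659901, 177288159589, 173758866037,
  280686409999, 277243196119, 146401109719, 142957897999, 249885440449, 246356147761,
  156474646153, 153030384457, 239038244071, 235507875487, 188156482387, 184627188727,
  270634026229, 267190812565, 177309207277, 173778837721, 280707405199, 277263141559,
  271911583501, 268467321373, 187109569051, 183579201007, 281983951915, 278540739655,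
  176261178733, 172731886477, 250904731813, 247374361825, 145095904555, 141651641455,
  240056498959, 236527204759, 155168351701, 151725138469, 188238285097, 184794021673,
  270801882691, 267271513027, 177390025999, 173946812119, 280874356081, 277345062529,
  146310843805, 142780475113, 249709041079, 246264779599, 156383159731, 152853867151,
  238860703249, 235417491313, 250985589415, 247542376075, 145262816557, 141733522573,
  240138261817, 236693998825, 155336248015, 151805877811, 271820135959, 268290843919,
  186931989349, 183488776981, 281893646149, 278363277889, 176084819215, 172640557195,
  177823694167, 174294401587, 281221904725, 277778692789, 187897086205, 184366717513,
  270374616439, 266930354959, 156730749199, 153287535319, 239294333509, 235765039957,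
  145883539645, 142439276221, 249367883011, 245837513347, 240571943269, 237041575009,
  155683783375, 152239521355, 250644377239, 247115085199, 144835563589, 141392351221,
  282241222333, 278796959341, 176518462759, 172988092555, 271392845083, 267949631743,
  186590817997, 183061524013, 156898723597, 153368354041, 239376254479, 235931990839,
  146050372591, 142521078931, 249448583473, 246005369809, 177647176861, 174202915165,
  281131520551, 277601151967, 187719663319, 184276451599, 270283248277, 266753955589,
  282408016399, 278878722199, 176599202101, 173155988869, 271560859333, 268030489345,
  186672699115, 183228436015, 240394481503, 236951269243, 155592454093, 152063161837,
  250467899785, 247023637657, 144745139563, 141214771519, 146401357903, 142958157199,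
  249885661741, 246356355121, 156474749833, 153030473233, 239038373671, 235508017075,
  188156623975, 184627318327, 270634115005, 267190916245, 177309414637, 173779059013,
  280707664399, 277263389743, 271911726061, 268467450001, 187109659771, 183579302743,
  281984160247, 278540959975, 176261439877, 172732132717, 250904978053, 247374622969,
  145096124875, 141651849787, 240056600695, 236527295479, 155168480329, 151725281029,
  188238505093, 184794230329, 270802129255, 267271773847, 177390153979, 173946955327,
  280874458465, 277345152601, 146310933877, 142780577497, 249709184287, 246264907579,
  156383420551, 152854113715, 238860911905, 235417711309, 250985678515, 247542479431,
  145262957821, 141733652497, 240138521665, 236694246361, 155336454727, 151806099751,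
  271820357899, 268291050631, 186932236885, 183489036829, 281893776073, 278363419153,
  176084922571, 172640646295, 177823797523, 174294490687, 281222034649, 277778834053,
  187897333741, 184366977361, 270374838379, 266930561671, 156730955911, 153287757259,
  239294593357, 235765287493, 145883680909, 142439406145, 249367972111, 245837616703,
  240572151925, 237041795005, 155684044195, 152239767919, 250644520447, 247115213179,
  144835653661, 141392453605, 282241324717, 278797049413, 176518590739, 172988235763,
  271393091647, 267949892563, 186591037993, 183061732669, 156898852225, 153368496601,
  239376356215, 235932081559, 146050592911, 142521287263, 249448829713, 246005630953,
  177647438005, 174203161405, 281131728883, 277601372287, 187719754039, 184276553335,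
  270283390837, 266754084217, 282408275599, 278878970383, 176599409461, 173156210161,
  271560948109, 268030593025, 186672840703, 183228565615, 240394611103, 236951410831,
  155592557773, 152063250613, 250468121077, 247023845017, 144745387747, 141215030719,
  282429270799, 278898915823, 176620457149, 173176181845, 271581051013, 268051745689,
  186692891119, 183249692035, 240415737523, 236971461247, 155613710437, 152083353517,
  250488092761, 247044892705, 144765333187, 141236025919, 156890217949, 153360912085,
  239367748183, 235924549531, 146042929663, 142512574255, 249441140221, 245996865457,
  177638672509, 174195471913, 281123015875, 277593709039, 187712222011, 184267945303,
  270275806321, 266745449941, 240582570793, 237053263633, 155694410575, 152251210303,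
  250656067807, 247125710779, 144847253509, 141402977449, 282251848561, 278808649261,
  176529088339, 172999783123, 271404534031, 267960258943, 186602506621, 183072151537,
  177806686435, 174276329839, 281204897317, 277760620717, 187879015429, 184349708809,
  270356546311, 266913345607, 156713739847, 153269465191, 239277324805, 235746969181,
  145865467573, 142422268813, 249349811263, 245820505615, 251003655655, 247559380567,
  145280882473, 141750527389, 240155265337, 236712066037, 155353250887, 151823945671,
  271838203819, 268307846791, 186950056561, 183505780501, 281910650965, 278381343805,
  176101823707, 172658623435, 188226590317, 184783391557, 270790188235, 267260882587,
  177379393939, 173935119283, 280863724669, 277333369045, 146299150321, 142769843701,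
  249697348243, 246254147539, 156372529291, 152842172695, 238850073133, 235405796533,
  271919021893, 268475821837, 187117008091, 183587700823, 281992453351, 278548177075,
  176269680493, 172739323573, 250912168909, 247382863585, 145103341975, 141660142891,
  240064998775, 236534643799, 155176852165, 151732576861, 146380913827, 142936637119,
  249865243909, 246334887529, 156453387217, 153010186621, 239016984811, 235487677975,
  188136284875, 184605929467, 270613828393, 267169553629, 177287947045, 173758641181,
  280686144319, 277242945667]

lemma L2_enc : L2.map enc = lit2 := by decide +kernel

lemma L3_enc : L3.map enc = lit3 := by decide +kernel

/-- Fast test that a number is not in a list. -/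
def notIn (a : ℕ) : List ℕ → Bool
  | [] => true
  | b :: l => bif Nat.beq a b then false else notIn a l

/-- Fast test that a list has no duplicates. -/
def ndB : List ℕ → Bool
  | [] => true
  | a :: l => bif notIn a l then ndB l else false

lemma notIn_spec (a : ℕ) (l : List ℕ) (h : notIn a l = true) : a ∉ l := by
  induction l with
  | nil => simp
  | cons b l ih =>
    cases hb : Nat.beq a b
    · have hab : a ≠ b := Nat.ne_of_beq_eq_false hb
      rw [notIn, hb] at h
      simp [hab, ih h]
    · rw [notIn, hb] at h
      exact absurd h Bool.false_ne_true

lemma ndB_spec (l : List ℕ) (h : ndB l = true) : l.Nodup := by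
  induction l with
  | nil => simp
  | cons b l ih =>
    cases hb : notIn b l
    · rw [ndB, hb] at h
      exact absurd h Bool.false_ne_true
    · rw [ndB, hb] at h
      exact List.nodup_cons.2 ⟨notIn_spec _ _ hb, ih h⟩

lemma lit2_nd : lit2.Nodup := ndB_spec _ (by decide +kernel)

lemma lit3_nd : lit3.Nodup := ndB_spec _ (by decide +kernel)

lemma L1_len : L1.length = 42 := by decide +kernel

lemma L1_nd : L1.Nodup := by decide +kernel

lemma L2_len : L2.length = 336 := by
  rw [← List.length_map enc, L2_enc]
  decide +kernel

lemma L3_len : L3.length = 512 := by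
  rw [← List.length_map enc, L3_enc]
  decide +kernel

lemma L2_nd : L2.Nodup := List.Nodup.of_map enc (L2_enc ▸ lit2_nd)

lemma L3_nd : L3.Nodup := List.Nodup.of_map enc (L3_enc ▸ lit3_nd)

lemma card_of_list (L : List (List ℤ)) (P : (Fin 24 → ℤ) → Prop) (hL : L.Nodup)
    (hlen : ∀ l ∈ L, l.length = 24) (h : ∀ T, P T ↔ List.ofFn T ∈ L) :
    Nat.card {T : Fin 24 → ℤ // P T} = L.length := by
  rw [← List.toFinset_card_of_nodup hL, ← Nat.card_eq_finsetCard]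
  refine Nat.card_congr (Equiv.ofBijective
    (fun T => ⟨List.ofFn T.1, List.mem_toFinset.2 ((h T.1).1 T.2)⟩) ⟨?_, ?_⟩)
  · intro S T hST
    exact Subtype.ext (List.ofFn_injective (congrArg Subtype.val hST))
  · rintro ⟨l, hl⟩
    have hl' := List.mem_toFinset.1 hl
    have h24 := hlen l hl'
    have key : List.ofFn (fun i : Fin 24 => l[i.val]'(by omega)) = l := by
      apply List.ext_getElem
      · rw [List.length_ofFn, h24]
      · intro i h1 h2
        rw [List.getElem_ofFn]
    exact ⟨⟨fun i => l[i.val]'(by omega), (h _).2 (by rw [key]; exact hl')⟩, Subtype.ext key⟩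
lemma inner_eq_four (x : Fin 24 → ℤ) : leechInner x x = 4 ↔ ∑ i, x i ^ 2 = 32 := by
  have h : (∑ i, (x i : ℚ) * (x i : ℚ)) = ((∑ i, x i ^ 2 : ℤ) : ℚ) := by
    push_cast
    exact Finset.sum_congr rfl fun i _ => (pow_two _).symm
  rw [leechInner, h, div_eq_iff (by norm_num)]
  norm_num
  norm_cast

lemma mem_TAB (T : Fin 24 → ℤ) : T ∈ TAB ↔ IsLeech T ∧
    ∑ i ∈ U, T i ^ 2 + T ⟨21, by omega⟩ ^ 2 + T ⟨22, by omega⟩ ^ 2 + T ⟨23, by omega⟩ ^ 2 = 32 ∧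
    T ⟨21, by omega⟩ = T ⟨23, by omega⟩ + 4 ∧ T ⟨22, by omega⟩ = T ⟨23, by omega⟩ + 4 := by
  have hA : ∑ i ∈ U, (T - vA) i ^ 2 = ∑ i ∈ U, T i ^ 2 := by
    refine Finset.sum_congr rfl fun i hi => ?_
    have hi : i.val < 21 := (Finset.mem_filter.1 hi).2
    have : vA i = 0 := by rw [vA, if_neg (by omega), if_neg (by omega)]
    rw [Pi.sub_apply, this, sub_zero]
  have hB : ∑ i ∈ U, (T - vB) i ^ 2 = ∑ i ∈ U, T i ^ 2 := by
    refine Finset.sum_congr rfl fun i hi => ?_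
    have hi : i.val < 21 := (Finset.mem_filter.1 hi).2
    have : vB i = 0 := by rw [vB, if_neg (by omega), if_neg (by omega)]
    rw [Pi.sub_apply, this, sub_zero]
  rw [TAB, Set.mem_ofPred_eq, inner_eq_four, inner_eq_four, inner_eq_four, U_sum, U_sum, U_sum,
    hA, hB]
  simp only [Pi.sub_apply, vA, vB]
  norm_num
  intro _ h1
  constructor
  · rintro ⟨h2, h3⟩
    exact ⟨by linarith, by linarith⟩
  · rintro ⟨h2, h3⟩
    rw [h2, h3] at h1 ⊢
    exact ⟨by linarith, by linarith⟩

lemma leech_iff (T : Fin 24 → ℤ) : IsLeech T ↔ ∃ m : ℤ, (m = 0 ∨ m = 1) ∧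
    (∀ i, (2:ℤ) ∣ (T i - m)) ∧
    (∃ n ∈ cw, ∀ i : Fin 24, n.testBit i.val = true ↔ (4:ℤ) ∣ (T i - m - 2)) ∧
    (8:ℤ) ∣ ((∑ i ∈ U, T i + T ⟨21, by omega⟩ + T ⟨22, by omega⟩ + T ⟨23, by omega⟩) - 4 * m) := by
  simp only [IsLeech, mem_golay, U_sum]
  refine exists_congr fun m => and_congr_right fun _ => and_congr_right fun _ =>
    and_congr_left fun _ => exists_congr fun n => and_congr_right fun _ => ?_
  rw [funext_iff]
  refine forall_congr' fun i => ?_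
  simp only [dec]
  by_cases h1 : n.testBit i.val = true <;> by_cases h2 : (4:ℤ) ∣ (T i - m - 2) <;> simp [h1, h2]

lemma mem_U {i : Fin 24} : i ∈ U ↔ i.val < 21 := by simp [U]

lemma fin_cases24 (P : Fin 24 → Prop) (h : ∀ i ∈ U, P i) (h1 : P ⟨21, by omega⟩)
    (h2 : P ⟨22, by omega⟩) (h3 : P ⟨23, by omega⟩) (i : Fin 24) : P i := by
  have : i.val < 21 ∨ i = ⟨21, by omega⟩ ∨ i = ⟨22, by omega⟩ ∨ i = ⟨23, by omega⟩ := by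
    simp only [Fin.ext_iff]
    omega
  rcases this with hi | rfl | rfl | rfl
  · exact h i (mem_U.2 hi)
  all_goals assumption

lemma card_ne_zero (T : Fin 24 → ℤ) :
    Nat.card {i : Fin 24 // i.val < 21 ∧ T i ≠ 0} = (U.filter fun i => T i ≠ 0).card := by
  rw [← Nat.card_eq_finsetCard]
  refine Nat.card_congr (Equiv.subtypeEquivRight fun i => ?_)
  rw [Finset.mem_filter, mem_U]

lemma U_card : U.card = 21 := by decide

lemma wt_sum (n : ℕ) : ∑ i ∈ U, (if n.testBit i.val = true then (1 : ℤ) else 0) = wt n := by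
  rw [wt, Finset.card_filter]
  push_cast
  rfl

lemma sq_ge_four {x : ℤ} (h : (4 : ℤ) ∣ x - 0 - 2) : 4 ≤ x ^ 2 := by
  obtain ⟨k, hk⟩ := h
  have : x ≤ -2 ∨ 2 ≤ x := by omega
  rcases this with h | h <;> nlinarith

lemma sq_ge_one {x : ℤ} (h : (2 : ℤ) ∣ x - 1) : 1 ≤ x ^ 2 := by
  have : x ≤ -1 ∨ 1 ≤ x := by omega
  rcases this with h | h <;> nlinarith

set_option maxHeartbeats 2000000 in
lemma classify (T : Fin 24 → ℤ) (hT : T ∈ TAB) :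
    IsType0 T ∨ IsType1 T ∨ IsType2 T ∨ IsType3 T := by
  obtain ⟨hL, hsq, h21, h22⟩ := (mem_TAB T).1 hT
  obtain ⟨m, hm, hpar, ⟨n, hn, hbit⟩, -⟩ := (leech_iff T).1 hL
  have hw := cw_weight n hn
  set a := T ⟨23, by omega⟩ with ha
  have hS0 : 0 ≤ ∑ i ∈ U, T i ^ 2 := Finset.sum_nonneg fun i _ => sq_nonneg _
  have ha1 : -6 < a := by
    rw [h21, h22] at hsq
    nlinarith
  have ha2 : a < 1 := by
    rw [h21, h22] at hsq
    nlinarith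
  have hp := hpar ⟨23, by omega⟩
  have b1 := hbit ⟨21, by omega⟩
  have b2 := hbit ⟨22, by omega⟩
  have b3 := hbit ⟨23, by omega⟩
  rw [← ha] at hp b3
  rw [h21] at b1
  rw [h22] at b2
  have hodd : m = 1 → 21 ≤ ∑ i ∈ U, T i ^ 2 := by
    rintro rfl
    have := Finset.card_nsmul_le_sum U (fun i => T i ^ 2) 1 fun i _ => sq_ge_one (hpar i)
    rw [U_card] at this
    simpa using this
  have hterm : m = 0 → ∀ i ∈ U, (if n.testBit i.val = true then (4 : ℤ) else 0) ≤ T i ^ 2 := by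
    rintro rfl i _
    split_ifs with h
    · exact sq_ge_four ((hbit i).1 h)
    · exact sq_nonneg _
  have hwsum : ∑ i ∈ U, (if n.testBit i.val = true then (4 : ℤ) else 0) = 4 * wt n := by
    rw [← wt_sum, Finset.mul_sum]
    exact Finset.sum_congr rfl fun i _ => by split_ifs <;> rfl
  have heven : m = 0 → 4 * (wt n : ℤ) ≤ ∑ i ∈ U, T i ^ 2 := by
    intro h
    rw [← hwsum]
    exact Finset.sum_le_sum (hterm h)
  have hcase : a = 0 ∨ a = -1 ∨ a = -2 ∨ a = -3 ∨ a = -4 ∨ a = -5 := by omega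
  rcases hcase with h | h | h | h | h | h <;> rw [h] at h21 h22 hp b1 b2 b3 <;>
    rw [h21, h22, h] at hsq
  · left
    have hz : ∑ i ∈ U, T i ^ 2 = 0 := by linarith
    rw [Finset.sum_eq_zero_iff_of_nonneg fun i _ => sq_nonneg _] at hz
    unfold IsType0
    funext i
    revert i
    apply fin_cases24
    · intro i hi
      rw [pow_eq_zero_iff two_ne_zero |>.1 (hz i hi)]
      have := mem_U.1 hi
      rw [if_neg (by omega)]
    · exact h21.trans (by simp)
    · exact h22.trans (by simp)
    · exact h.trans (by simp)
  · have := hodd (by omega)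
    omega
  · right; right; left
    have m0 : m = 0 := by omega
    subst m0
    have hs : ∑ i ∈ U, T i ^ 2 = 20 := by linarith
    have h4 := heven rfl
    have c1 : n.testBit 21 = true := b1.2 (by norm_num)
    have c2 : n.testBit 22 = true := b2.2 (by norm_num)
    have c3 : n.testBit 23 = true := b3.2 (by norm_num)
    simp only [wtAll, c1, c2, c3, Bool.toNat_true] at hw
    have hw5 : wt n = 5 := by omega
    have heq : ∀ i ∈ U, (if n.testBit i.val = true then (4 : ℤ) else 0) = T i ^ 2 :=
      (Finset.sum_eq_sum_iff_of_le (hterm rfl)).1 (by rw [hwsum, hs, hw5]; norm_num)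
    have hval : ∀ i ∈ U, (n.testBit i.val = true ∧ (T i = 2 ∨ T i = -2)) ∨
        (¬ n.testBit i.val = true ∧ T i = 0) := by
      intro i hi
      have := heq i hi
      split_ifs at this with hb
      · left
        exact ⟨hb, sq_eq_sq_iff_eq_or_eq_neg.1 (by rw [← this]; norm_num)⟩
      · right
        exact ⟨hb, pow_eq_zero_iff two_ne_zero |>.1 this.symm⟩
    refine ⟨fun i hi => ?_, ?_, h21, h22, h⟩
    · rcases hval i (mem_U.2 hi) with ⟨-, y⟩ | ⟨-, y⟩
      · exact Or.inr y
      · exact Or.inl y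
    · rw [card_ne_zero]
      refine Eq.trans (congrArg Finset.card ?_) hw5
      refine Finset.filter_congr fun i hi => ?_
      rcases hval i hi with ⟨x, y⟩ | ⟨x, y⟩
      · simp only [x, iff_true]
        omega
      · simp [x, y]
  · right; right; right
    have m1 : m = 1 := by omega
    subst m1
    have hs : ∑ i ∈ U, (1 : ℤ) = ∑ i ∈ U, T i ^ 2 := by
      rw [Finset.sum_const, U_card]
      norm_num
      linarith
    have heq := (Finset.sum_eq_sum_iff_of_le fun i _ => sq_ge_one (hpar i)).1 hs
    refine ⟨fun i hi => ?_, h21, h22, h⟩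
    exact sq_eq_sq_iff_eq_or_eq_neg.1 (by rw [← heq i (mem_U.2 hi)]; norm_num)
  · right; left
    have m0 : m = 0 := by omega
    subst m0
    have hs : ∑ i ∈ U, T i ^ 2 = 16 := by linarith
    have h4 := heven rfl
    have c1 : n.testBit 21 = false := by
      rw [Bool.eq_false_iff]
      exact fun hh => absurd (b1.1 hh) (by norm_num)
    have c2 : n.testBit 22 = false := by
      rw [Bool.eq_false_iff]
      exact fun hh => absurd (b2.1 hh) (by norm_num)
    have c3 : n.testBit 23 = false := by
      rw [Bool.eq_false_iff]
      exact fun hh => absurd (b3.1 hh) (by norm_num)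
    simp only [wtAll, c1, c2, c3, Bool.toNat_false] at hw
    have hw0 : wt n = 0 := by omega
    rw [wt, Finset.card_eq_zero, Finset.filter_eq_empty_iff] at hw0
    have hdiv : ∀ i ∈ U, ∃ u : ℤ, T i = 4 * u := by
      intro i hi
      have h1 : ¬ (4:ℤ) ∣ (T i - 0 - 2) := fun hh => hw0 hi ((hbit i).2 hh)
      have h2 := hpar i
      exact ⟨T i / 4, by omega⟩
    have hge : ∀ i ∈ U, (if T i ≠ 0 then (16 : ℤ) else 0) ≤ T i ^ 2 := by
      intro i hi
      split_ifs with h0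
      · obtain ⟨u, hu⟩ := hdiv i hi
        have : u ≤ -1 ∨ 1 ≤ u := by omega
        rw [hu]
        rcases this with h | h <;> nlinarith
      · exact sq_nonneg _
    have hcs : ∑ i ∈ U, (if T i ≠ 0 then (16 : ℤ) else 0) =
        16 * ((U.filter fun i => T i ≠ 0).card : ℤ) := by
      rw [← Finset.sum_filter, Finset.sum_const]
      simp [mul_comm]
    have hle := Finset.sum_le_sum hge
    rw [hcs, hs] at hle
    have hpos : (U.filter fun i => T i ≠ 0).card ≠ 0 := by
      intro h0
      rw [Finset.card_eq_zero, Finset.filter_eq_empty_iff] at h0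
      rw [Finset.sum_eq_zero fun i hi => by rw [not_not.1 (h0 hi)]; norm_num] at hs
      norm_num at hs
    have hc1 : (U.filter fun i => T i ≠ 0).card = 1 := by omega
    have heq := (Finset.sum_eq_sum_iff_of_le hge).1 (by rw [hcs, hs, hc1]; norm_num)
    refine ⟨fun i hi => ?_, by rw [card_ne_zero, hc1], h21, h22, h⟩
    have := heq i (mem_U.2 hi)
    split_ifs at this with h0
    · right
      exact sq_eq_sq_iff_eq_or_eq_neg.1 (by rw [← this]; norm_num)
    · left
      exact not_not.1 h0
  · have := hodd (by omega)
    omega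

lemma bitSum_21 (n : ℕ) : bitSum n 21 = wt n := by
  have h := wtAll_eq n
  rw [wtAll, bitSum, bitSum, bitSum, Nat.toNat_testBit, Nat.toNat_testBit, Nat.toNat_testBit,
    Nat.shiftRight_eq_div_pow, Nat.shiftRight_eq_div_pow, Nat.shiftRight_eq_div_pow] at h
  omega

lemma forall₂_ofFn {α β : Type*} {k : ℕ} (R : α → β → Prop) (f : Fin k → α) (g : Fin k → β) :
    List.Forall₂ R (List.ofFn f) (List.ofFn g) ↔ ∀ i, R (f i) (g i) := by
  induction k with
  | zero => simp
  | succ k ih =>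
    rw [List.ofFn_succ, List.ofFn_succ, List.forall₂_cons, ih, Fin.forall_fin_succ]

lemma mem_L2 (T : Fin 24 → ℤ) : List.ofFn T ∈ L2 ↔ ∃ n ∈ cw,
    (n.testBit 21 = true ∧ n.testBit 22 = true ∧ n.testBit 23 = true ∧ wt n = 5) ∧
    (∀ i : Fin 24, T i ∈ (if i.val < 21 then (if n.testBit i.val then [2, -2] else [0])
    else if i.val < 23 then [2] else [(-2 : ℤ)])) ∧ (∑ i, T i) % 8 = 0 := by
  simp only [L2, cw2, List.mem_flatMap, List.mem_filter, List.mem_sections, forall₂_ofFn,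
    List.sum_ofFn, beq_iff_eq, bitSum_21, Bool.and_eq_true, and_assoc]

lemma char2 (T : Fin 24 → ℤ) : (T ∈ TAB ∧ IsType2 T) ↔ List.ofFn T ∈ L2 := by
  rw [mem_L2, mem_TAB, leech_iff, IsType2, card_ne_zero, U_sum]
  constructor
  · rintro ⟨⟨⟨m, hm, hpar, ⟨n, hn, hbit⟩, h8⟩, -⟩, hval, hcard, h21, h22, h23⟩
    have hp := hpar ⟨21, by omega⟩
    rw [h21] at hp
    have m0 : m = 0 := by omega
    subst m0
    have b1 := hbit ⟨21, by omega⟩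
    have b2 := hbit ⟨22, by omega⟩
    have b3 := hbit ⟨23, by omega⟩
    rw [h21] at b1
    rw [h22] at b2
    rw [h23] at b3
    have hv : ∀ i ∈ U, (n.testBit i.val = true ∧ (T i = 2 ∨ T i = -2)) ∨
        (¬ n.testBit i.val = true ∧ T i = 0) := by
      intro i hi
      have hb := hbit i
      rcases hval i (mem_U.1 hi) with h | h | h <;> rw [h] at hb ⊢
      · exact Or.inr ⟨fun hh => absurd (hb.1 hh) (by norm_num), rfl⟩
      · exact Or.inl ⟨hb.2 (by norm_num), by norm_num⟩
      · exact Or.inl ⟨hb.2 (by norm_num), by norm_num⟩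
    refine ⟨n, hn, ⟨b1.2 (by norm_num), b2.2 (by norm_num), b3.2 (by norm_num), ?_⟩, ?_, by omega⟩
    · refine Eq.trans (congrArg Finset.card ?_) hcard
      refine Finset.filter_congr fun i hi => ?_
      rcases hv i hi with ⟨x, y⟩ | ⟨x, y⟩
      · simp only [x, true_iff]
        omega
      · simp [x, y]
    · apply fin_cases24
      · intro i hi
        rw [if_pos (mem_U.1 hi)]
        rcases hv i hi with ⟨x, y⟩ | ⟨x, y⟩
        · rw [if_pos x]
          simpa using y
        · rw [if_neg x]
          simpa using y
      · rw [h21]; exact List.mem_singleton.2 rfl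
      · rw [h22]; exact List.mem_singleton.2 rfl
      · rw [h23]; exact List.mem_singleton.2 rfl
  · rintro ⟨n, hn, ⟨b1, b2, b3, hw⟩, hmem, h8⟩
    have h21 : T ⟨21, by omega⟩ = 2 := List.mem_singleton.1 (hmem ⟨21, by omega⟩)
    have h22 : T ⟨22, by omega⟩ = 2 := List.mem_singleton.1 (hmem ⟨22, by omega⟩)
    have h23 : T ⟨23, by omega⟩ = -2 := List.mem_singleton.1 (hmem ⟨23, by omega⟩)
    have hv : ∀ i ∈ U, (n.testBit i.val = true ∧ (T i = 2 ∨ T i = -2)) ∨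
        (¬ n.testBit i.val = true ∧ T i = 0) := by
      intro i hi
      have h := hmem i
      rw [if_pos (mem_U.1 hi)] at h
      split_ifs at h with hb
      · exact Or.inl ⟨hb, by simpa using h⟩
      · exact Or.inr ⟨hb, by simpa using h⟩
    have hsq : ∑ i ∈ U, T i ^ 2 = 20 := by
      have : ∑ i ∈ U, T i ^ 2 = ∑ i ∈ U, 4 * (if n.testBit i.val = true then (1 : ℤ) else 0) := by
        refine Finset.sum_congr rfl fun i hi => ?_
        rcases hv i hi with ⟨x, y | y⟩ | ⟨x, y⟩ <;> rw [y]
        · rw [if_pos x]; norm_num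
        · rw [if_pos x]; norm_num
        · rw [if_neg x]; norm_num
      rw [this, ← Finset.mul_sum, wt_sum, hw]
      norm_num
    refine ⟨⟨⟨0, Or.inl rfl, ?_, ⟨n, hn, ?_⟩, by omega⟩, ?_, ?_, ?_⟩, ?_, ?_, h21, h22, h23⟩
    · apply fin_cases24
      · intro i hi
        rcases hv i hi with ⟨x, y | y⟩ | ⟨x, y⟩ <;> rw [y] <;> norm_num
      · rw [h21]; norm_num
      · rw [h22]; norm_num
      · rw [h23]; norm_num
    · apply fin_cases24
      · intro i hi
        rcases hv i hi with ⟨x, y | y⟩ | ⟨x, y⟩ <;> rw [y]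
        · simp [x]
        · simp only [x, true_iff]; norm_num
        · simp only [x]; norm_num
      · rw [h21]; simp [b1]
      · rw [h22]; simp [b2]
      · rw [h23]; simp only [b3, true_iff]; norm_num
    · rw [hsq, h21, h22, h23]; norm_num
    · rw [h21, h23]; norm_num
    · rw [h22, h23]; norm_num
    · intro i hi
      rcases hv i (mem_U.2 hi) with ⟨-, y⟩ | ⟨-, y⟩
      · exact Or.inr y
      · exact Or.inl y
    · rw [← hw]
      refine congrArg Finset.card (Finset.filter_congr fun i hi => ?_)
      rcases hv i hi with ⟨x, y⟩ | ⟨x, y⟩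
      · simp only [x, iff_true]
        omega
      · simp [x, y]

lemma mem_L3 (T : Fin 24 → ℤ) : List.ofFn T ∈ L3 ↔ ∃ n ∈ cw,
    (n.testBit 21 = false ∧ n.testBit 22 = false ∧ n.testBit 23 = false) ∧
    ∀ i : Fin 24, (if i.val < 21 then (if n.testBit i.val then -1 else 1)
    else if i.val < 23 then 1 else (-3 : ℤ)) = T i := by
  simp only [L3, cw3, List.mem_map, List.mem_filter, List.ofFn_inj, Bool.and_eq_true,
    Bool.not_eq_true', and_assoc, funext_iff]

lemma char3 (T : Fin 24 → ℤ) : (T ∈ TAB ∧ IsType3 T) ↔ List.ofFn T ∈ L3 := by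
  rw [mem_L3, mem_TAB, leech_iff, IsType3]
  constructor
  · rintro ⟨⟨⟨m, hm, hpar, ⟨n, hn, hbit⟩, -⟩, -⟩, hval, h21, h22, h23⟩
    have hp := hpar ⟨21, by omega⟩
    rw [h21] at hp
    have m1 : m = 1 := by omega
    subst m1
    have b1 := hbit ⟨21, by omega⟩
    have b2 := hbit ⟨22, by omega⟩
    have b3 := hbit ⟨23, by omega⟩
    rw [h21] at b1
    rw [h22] at b2
    rw [h23] at b3
    refine ⟨n, hn, ⟨?_, ?_, ?_⟩, ?_⟩
    · rw [Bool.eq_false_iff]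
      exact fun hh => absurd (b1.1 hh) (by norm_num)
    · rw [Bool.eq_false_iff]
      exact fun hh => absurd (b2.1 hh) (by norm_num)
    · rw [Bool.eq_false_iff]
      exact fun hh => absurd (b3.1 hh) (by norm_num)
    · apply fin_cases24
      · intro i hi
        rw [if_pos (mem_U.1 hi)]
        have hb := hbit i
        rcases hval i (mem_U.1 hi) with h | h <;> rw [h] at hb ⊢
        · rw [if_neg fun hh => absurd (hb.1 hh) (by norm_num)]
        · rw [if_pos (hb.2 (by norm_num))]
      · rw [h21]; rfl
      · rw [h22]; rfl
      · rw [h23]; rfl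
  · rintro ⟨n, hn, ⟨b1, b2, b3⟩, hmem⟩
    have h21 : T ⟨21, by omega⟩ = 1 := (hmem ⟨21, by omega⟩).symm
    have h22 : T ⟨22, by omega⟩ = 1 := (hmem ⟨22, by omega⟩).symm
    have h23 : T ⟨23, by omega⟩ = -3 := (hmem ⟨23, by omega⟩).symm
    have hv : ∀ i ∈ U, (n.testBit i.val = true ∧ T i = -1) ∨
        (¬ n.testBit i.val = true ∧ T i = 1) := by
      intro i hi
      have h := hmem i
      rw [if_pos (mem_U.1 hi)] at h
      split_ifs at h with hb
      · exact Or.inl ⟨hb, h.symm⟩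
      · exact Or.inr ⟨hb, h.symm⟩
    have hsq : ∑ i ∈ U, T i ^ 2 = 21 := by
      have : ∑ i ∈ U, T i ^ 2 = ∑ i ∈ U, 1 := by
        refine Finset.sum_congr rfl fun i hi => ?_
        rcases hv i hi with ⟨x, y⟩ | ⟨x, y⟩ <;> rw [y] <;> norm_num
      rw [this, Finset.sum_const, U_card]
      norm_num
    have hsum : ∑ i ∈ U, T i = 21 - 2 * wt n := by
      have : ∑ i ∈ U, T i = ∑ i ∈ U, (1 - 2 * (if n.testBit i.val = true then (1 : ℤ) else 0)) := by
        refine Finset.sum_congr rfl fun i hi => ?_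
        rcases hv i hi with ⟨x, y⟩ | ⟨x, y⟩ <;> rw [y]
        · rw [if_pos x]; norm_num
        · rw [if_neg x]; norm_num
      rw [this, Finset.sum_sub_distrib, ← Finset.mul_sum, wt_sum, Finset.sum_const, U_card]
      norm_num
    have hw := (cw_weight n hn).2
    simp only [wtAll, b1, b2, b3, Bool.toNat_false] at hw
    refine ⟨⟨⟨1, Or.inr rfl, ?_, ⟨n, hn, ?_⟩, ?_⟩, ?_, ?_, ?_⟩, ?_, h21, h22, h23⟩
    · apply fin_cases24
      · intro i hi
        rcases hv i hi with ⟨x, y⟩ | ⟨x, y⟩ <;> rw [y] <;> norm_num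
      · rw [h21]; norm_num
      · rw [h22]; norm_num
      · rw [h23]; norm_num
    · apply fin_cases24
      · intro i hi
        rcases hv i hi with ⟨x, y⟩ | ⟨x, y⟩ <;> rw [y]
        · simp only [x, true_iff]; norm_num
        · simp only [x]; norm_num
      · rw [h21]; simp only [b1]; norm_num
      · rw [h22]; simp only [b2]; norm_num
      · rw [h23]; simp only [b3]; norm_num
    · rw [hsum, h21, h22, h23]
      omega
    · rw [hsq, h21, h22, h23]; norm_num
    · rw [h21, h23]; norm_num
    · rw [h22, h23]; norm_num
    · intro i hi
      rcases hv i (mem_U.2 hi) with ⟨-, y⟩ | ⟨-, y⟩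
      · exact Or.inr y
      · exact Or.inl y

lemma zero_mem_cw : 0 ∈ cw := by
  have h : ∀ L : List ℕ, 0 ∈ gen L := by
    intro L
    induction L with
    | nil => simp [gen]
    | cons r L ih => simp [gen, ih]
  exact h _

lemma mem_L1 (T : Fin 24 → ℤ) : List.ofFn T ∈ L1 ↔ ∃ k : Fin 21, ∃ e : ℤ, (e = 4 ∨ e = -4) ∧
    ∀ i : Fin 24, (if i.val < 21 then (if i.val = k.val then e else 0)
    else if i.val < 23 then 0 else (-4 : ℤ)) = T i := by
  simp only [L1, List.mem_map, List.mem_flatMap, List.mem_finRange, true_and, List.ofFn_inj,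
    funext_iff, List.mem_cons, List.not_mem_nil, or_false]

lemma char1 (T : Fin 24 → ℤ) : (T ∈ TAB ∧ IsType1 T) ↔ List.ofFn T ∈ L1 := by
  rw [mem_L1, mem_TAB, leech_iff, IsType1, card_ne_zero]
  constructor
  · rintro ⟨-, hval, hcard, h21, h22, h23⟩
    obtain ⟨k, hk⟩ := Finset.card_eq_one.1 hcard
    have hkm : k ∈ U.filter fun i => T i ≠ 0 := by rw [hk]; exact Finset.mem_singleton_self k
    obtain ⟨hkU, hk0⟩ := Finset.mem_filter.1 hkm
    refine ⟨⟨k.val, mem_U.1 hkU⟩, T k, (hval k (mem_U.1 hkU)).resolve_left hk0, ?_⟩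
    apply fin_cases24
    · intro i hi
      rw [if_pos (mem_U.1 hi)]
      split_ifs with h
      · rw [Fin.ext h]
      · by_contra h0
        have : i ∈ U.filter fun i => T i ≠ 0 := Finset.mem_filter.2 ⟨hi, fun hh => h0 hh.symm⟩
        rw [hk, Finset.mem_singleton] at this
        exact h (congrArg Fin.val this)
    · rw [h21]; rfl
    · rw [h22]; rfl
    · rw [h23]; rfl
  · rintro ⟨k, e, he, hmem⟩
    have h21 : T ⟨21, by omega⟩ = 0 := (hmem ⟨21, by omega⟩).symm
    have h22 : T ⟨22, by omega⟩ = 0 := (hmem ⟨22, by omega⟩).symm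
    have h23 : T ⟨23, by omega⟩ = -4 := (hmem ⟨23, by omega⟩).symm
    obtain ⟨k', hk'⟩ : ∃ k' : Fin 24, k'.val = k.val := ⟨⟨k.val, by omega⟩, rfl⟩
    have hkU : k' ∈ U := mem_U.2 (by omega)
    have hv : ∀ i ∈ U, T i = if i = k' then e else 0 := by
      intro i hi
      rw [← hmem i, if_pos (mem_U.1 hi), ← hk']
      simp only [Fin.ext_iff]
    have hk : T k' = e := by rw [hv k' hkU, if_pos rfl]
    have hn : ∀ i ∈ U, i ≠ k' → T i = 0 := fun i hi h => by rw [hv i hi, if_neg h]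
    have hsq : ∑ i ∈ U, T i ^ 2 = 16 := by
      rw [Finset.sum_eq_single_of_mem k' hkU fun i hi h => by rw [hn i hi h]; norm_num, hk]
      rcases he with rfl | rfl <;> norm_num
    have hsum : ∑ i ∈ U, T i = e := by
      rw [Finset.sum_eq_single_of_mem k' hkU fun i hi h => hn i hi h, hk]
    have hdiv : ∀ i, (4 : ℤ) ∣ T i := by
      apply fin_cases24
      · intro i hi
        rw [hv i hi]
        split_ifs <;> omega
      · rw [h21]; norm_num
      · rw [h22]; norm_num
      · rw [h23]; norm_num
    refine ⟨⟨⟨0, Or.inl rfl, ?_, ⟨0, zero_mem_cw, ?_⟩, ?_⟩, ?_, ?_, ?_⟩, ?_, ?_, h21, h22, h23⟩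
    · intro i
      have := hdiv i
      omega
    · intro i
      have := hdiv i
      simp only [Nat.zero_testBit, Bool.false_eq_true, false_iff]
      omega
    · rw [hsum, h21, h22, h23]
      omega
    · rw [hsq, h21, h22, h23]; norm_num
    · rw [h21, h23]; norm_num
    · rw [h22, h23]; norm_num
    · intro i hi
      rw [hv i (mem_U.2 hi)]
      split_ifs
      · exact Or.inr he
      · exact Or.inl rfl
    · rw [Finset.card_eq_one]
      refine ⟨k', ?_⟩
      ext i
      rw [Finset.mem_filter, Finset.mem_singleton]
      constructor
      · rintro ⟨hi, h0⟩
        by_contra h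
        exact h0 (hn i hi h)
      · rintro rfl
        refine ⟨hkU, ?_⟩
        rw [hk]
        omega

lemma type0_mem (T : Fin 24 → ℤ) (h : IsType0 T) : T ∈ TAB := by
  have hv : ∀ i ∈ U, T i = 0 := by
    intro i hi
    have := mem_U.1 hi
    rw [h]
    exact if_neg (by omega)
  have h21 : T ⟨21, by omega⟩ = 4 := by rw [h]; rfl
  have h22 : T ⟨22, by omega⟩ = 4 := by rw [h]; rfl
  have h23 : T ⟨23, by omega⟩ = 0 := by rw [h]; rfl
  rw [mem_TAB, leech_iff]
  have hsq : ∑ i ∈ U, T i ^ 2 = 0 := Finset.sum_eq_zero fun i hi => by rw [hv i hi]; norm_num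
  have hsum : ∑ i ∈ U, T i = 0 := Finset.sum_eq_zero hv
  have hdiv : ∀ i, (4 : ℤ) ∣ T i := by
    apply fin_cases24
    · intro i hi
      rw [hv i hi]; norm_num
    · rw [h21]
    · rw [h22]
    · rw [h23]; norm_num
  refine ⟨⟨0, Or.inl rfl, ?_, ⟨0, zero_mem_cw, ?_⟩, ?_⟩, ?_, ?_, ?_⟩
  · intro i
    have := hdiv i
    omega
  · intro i
    have := hdiv i
    simp only [Nat.zero_testBit, Bool.false_eq_true, false_iff]
    omega
  · rw [hsum, h21, h22, h23]; norm_num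
  · rw [hsq, h21, h22, h23]; norm_num
  · rw [h21, h23]; norm_num
  · rw [h22, h23]; norm_num

lemma L1_all : ∀ l ∈ L1, l.length = 24 := by
  intro l hl
  simp only [L1, List.mem_map, List.mem_flatMap] at hl
  obtain ⟨k, -, e, -, rfl⟩ := hl
  exact List.length_ofFn

lemma L2_all : ∀ l ∈ L2, l.length = 24 := by
  intro l hl
  simp only [L2, List.mem_filter, List.mem_flatMap, List.mem_sections] at hl
  obtain ⟨n, -, h, -⟩ := hl
  rw [h.length_eq, List.length_ofFn]

lemma L3_all : ∀ l ∈ L3, l.length = 24 := by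
  intro l hl
  simp only [L3, List.mem_map] at hl
  obtain ⟨n, -, rfl⟩ := hl
  exact List.length_ofFn

/-- the 891 points of `T_AB` consist of 1 vector of type 0,
42 of type 1, 336 of type 2 and 512 of type 3. -/
theorem TAB_types :
    (∀ T ∈ TAB, IsType0 T ∨ IsType1 T ∨ IsType2 T ∨ IsType3 T) ∧
    Nat.card {T : Fin 24 → ℤ // T ∈ TAB ∧ IsType0 T} = 1 ∧
    Nat.card {T : Fin 24 → ℤ // T ∈ TAB ∧ IsType1 T} = 42 ∧
    Nat.card {T : Fin 24 → ℤ // T ∈ TAB ∧ IsType2 T} = 336 ∧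
    Nat.card {T : Fin 24 → ℤ // T ∈ TAB ∧ IsType3 T} = 512 := by
  refine ⟨classify, ?_, ?_, ?_, ?_⟩
  · rw [Nat.card_eq_one_iff_unique]
    refine ⟨⟨fun S T => Subtype.ext (S.2.2.trans T.2.2.symm)⟩, ⟨⟨_, type0_mem _ rfl, rfl⟩⟩⟩
  · rw [card_of_list L1 _ L1_nd L1_all char1, L1_len]
  · rw [card_of_list L2 _ L2_nd L2_all char2, L2_len]
  · rw [card_of_list L3 _ L3_nd L3_all char3, L3_len]
end

section
/- Let H ⊂ F₂^S be the binary code on the set S = P²(F₄) of 21 points of the projective plane over F₄, generated by the 21 characteristic vectors of F₄-rational lines (each of weight 5). Then dim H = 10 and H has weight distribution 0¹ 5²¹ 8²¹⁰ 9²⁸⁰ 12²⁸⁰ 13²¹⁰ 16²¹ 21¹. -/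
open scoped BigOperators Classical

/-- The field `F₄`. -/
abbrev F4 : Type := GaloisField 2 2

/-- The set `S = P²(F₄)`: points of the projective plane over `F₄`,
as 1-dimensional linear subspaces of `F₄³`. -/
def ProjPt : Type := {p : Submodule F4 (Fin 3 → F4) // Module.finrank F4 p = 1}

/-- `F₄`-rational lines of `P²`, as 2-dimensional linear subspaces of `F₄³`. -/
def ProjLine : Type := {l : Submodule F4 (Fin 3 → F4) // Module.finrank F4 l = 2}

/-- The characteristic vector `ℓ(F₄) ⊆ S` of a line. -/
noncomputable def lineWord (l : ProjLine) : ProjPt → ZMod 2 :=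
  fun p => if p.val ≤ l.val then 1 else 0

/-- The code `H ⊆ F₂^S` spanned by the characteristic vectors of the lines. -/
noncomputable def Hcode : Submodule (ZMod 2) (ProjPt → ZMod 2) :=
  Submodule.span (ZMod 2) (Set.range lineWord)

/-- Weight of a word in `F₂^S`. -/
noncomputable def wtS (w : ProjPt → ZMod 2) : ℕ := Nat.card {p : ProjPt // w p ≠ 0}

/-! ### A computable model of the field with four elements -/

/-- Addition on codes `0, 1, 2 = ω, 3 = ω + 1`. -/
def add4 (a b : Fin 4) : Fin 4 := ![![0, 1, 2, 3], ![1, 0, 3, 2], ![2, 3, 0, 1], ![3, 2, 1, 0]] a b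

/-- Multiplication on codes. -/
def mul4 (a b : Fin 4) : Fin 4 := ![![0, 0, 0, 0], ![0, 1, 2, 3], ![0, 2, 3, 1], ![0, 3, 1, 2]] a b

/-- Normalized coordinates of the 21 points. -/
def ptc : Fin 21 → Fin 3 → Fin 4 :=
  ![![0,0,1], ![0,1,0], ![0,1,1], ![0,1,2], ![0,1,3],
    ![1,0,0], ![1,0,1], ![1,0,2], ![1,0,3],
    ![1,1,0], ![1,1,1], ![1,1,2], ![1,1,3],
    ![1,2,0], ![1,2,1], ![1,2,2], ![1,2,3],
    ![1,3,0], ![1,3,1], ![1,3,2], ![1,3,3]]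

/-- Dot product on codes. -/
def dot4 (u v : Fin 3 → Fin 4) : Fin 4 :=
  add4 (add4 (mul4 (u 0) (v 0)) (mul4 (u 1) (v 1))) (mul4 (u 2) (v 2))

theorem ptc_normalize : ∀ a b c : Fin 4, (a ≠ 0 ∨ b ≠ 0 ∨ c ≠ 0) →
    ∃ s : Fin 4, s ≠ 0 ∧ ∃ i : Fin 21,
      a = mul4 s (ptc i 0) ∧ b = mul4 s (ptc i 1) ∧ c = mul4 s (ptc i 2) := by
  decide +kernel

theorem ptc_inj : ∀ i j : Fin 21, ∀ s : Fin 4,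
    (ptc i 0 = mul4 s (ptc j 0) ∧ ptc i 1 = mul4 s (ptc j 1) ∧ ptc i 2 = mul4 s (ptc j 2)) →
    i = j := by
  decide +kernel

theorem ptc_ne : ∀ i : Fin 21, ptc i 0 ≠ 0 ∨ ptc i 1 ≠ 0 ∨ ptc i 2 ≠ 0 := by
  decide +kernel

theorem exists_omega : ∃ w : F4, w ^ 2 = w + 1 ∧ ∀ x : F4, x = 0 ∨ x = 1 ∨ x = w ∨ x = w + 1 := by
  have hc : Nat.card F4 = 4 := by
    simpa using GaloisField.card 2 2 (by norm_num)
  have : Finite F4 := Nat.finite_of_card_ne_zero (by omega)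
  let : Fintype F4 := Fintype.ofFinite F4
  have hc' : Fintype.card F4 = 4 := by rw [← Nat.card_eq_fintype_card]; exact hc
  have h2 : (2 : F4) = 0 := by exact_mod_cast CharP.cast_eq_zero F4 2
  have hex : ∃ w : F4, w ∉ ({0, 1} : Finset F4) := by
    by_contra! h
    have h1 : (Finset.univ : Finset F4) ⊆ {0, 1} := fun x _ => h x
    have := Finset.card_le_card h1
    have h3 : ({0, 1} : Finset F4).card ≤ 2 := Finset.card_le_two
    rw [Finset.card_univ, hc'] at this
    omega
  obtain ⟨w, hw⟩ := hex
  simp only [Finset.mem_insert, Finset.mem_singleton, not_or] at hw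
  obtain ⟨hw0, hw1⟩ := hw
  have hp : w ^ 4 = w := by
    have := FiniteField.pow_card w
    rwa [hc'] at this
  have hq : w ^ 2 = w + 1 := by
    have h3 : w * ((w - 1) * (w ^ 2 - (w + 1))) = 0 := by
      linear_combination hp - (w ^ 3 - w) * h2
    have h4 := (mul_eq_zero.1 ((mul_eq_zero.1 h3).resolve_left hw0)).resolve_left (sub_ne_zero.2 hw1)
    exact sub_eq_zero.1 h4
  refine ⟨w, hq, ?_⟩
  have hu : ({0, 1, w, w + 1} : Finset F4) = Finset.univ := by
    apply Finset.eq_univ_of_card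
    rw [hc']
    have a1 : (0 : F4) ≠ w + 1 := fun h => hw1 (by linear_combination (-1 : F4) * h - h2)
    have a2 : (1 : F4) ≠ w + 1 := fun h => hw0 (by linear_combination (-1 : F4) * h)
    have a3 : w ≠ w + 1 := by simp
    rw [Finset.card_insert_of_notMem, Finset.card_insert_of_notMem, Finset.card_insert_of_notMem,
      Finset.card_singleton]
    · simp
    · simp only [Finset.mem_insert, Finset.mem_singleton, not_or]; exact ⟨Ne.symm hw1, a2⟩
    · simp only [Finset.mem_insert, Finset.mem_singleton, not_or]
      exact ⟨zero_ne_one, Ne.symm hw0, a1⟩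
  intro x
  have := Finset.mem_univ x
  rw [← hu] at this
  simpa using this

/-- There is an isomorphism of the model with `F4`. -/
theorem exists_phi : ∃ f : Fin 4 → F4, Function.Bijective f ∧ f 0 = 0 ∧
    (∀ a b, f (add4 a b) = f a + f b) ∧ (∀ a b, f (mul4 a b) = f a * f b) := by
  obtain ⟨w, hq, hall⟩ := exists_omega
  have h2 : (2 : F4) = 0 := by exact_mod_cast CharP.cast_eq_zero F4 2
  have hc : Nat.card F4 = 4 := by
    simpa using GaloisField.card 2 2 (by norm_num)
  have : Finite F4 := Nat.finite_of_card_ne_zero (by omega)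
  refine ⟨![0, 1, w, w + 1], ?_, rfl, ?_, ?_⟩
  · rw [Nat.bijective_iff_surjective_and_card]
    refine ⟨?_, by rw [hc]; simp⟩
    intro x
    rcases hall x with h | h | h | h
    · exact ⟨0, h.symm⟩
    · exact ⟨1, h.symm⟩
    · exact ⟨2, h.symm⟩
    · exact ⟨3, h.symm⟩
  · intro a b
    fin_cases a <;> fin_cases b <;> simp [add4] <;> grind
  · intro a b
    fin_cases a <;> fin_cases b <;> simp [mul4] <;> grind

/-- The chosen bijection. -/
noncomputable def phi : Fin 4 → F4 := exists_phi.choose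

theorem phi_bij : Function.Bijective phi := exists_phi.choose_spec.1
theorem phi_zero : phi 0 = 0 := exists_phi.choose_spec.2.1
theorem phi_add (a b : Fin 4) : phi (add4 a b) = phi a + phi b := exists_phi.choose_spec.2.2.1 a b
theorem phi_mul (a b : Fin 4) : phi (mul4 a b) = phi a * phi b := exists_phi.choose_spec.2.2.2 a b
theorem phi_eq_zero (a : Fin 4) : phi a = 0 ↔ a = 0 := by
  rw [← phi_zero]; exact phi_bij.1.eq_iff

/-- Representative vectors of the points. -/
noncomputable def pv (i : Fin 21) : Fin 3 → F4 := fun k => phi (ptc i k)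

theorem pv_ne (i : Fin 21) : pv i ≠ 0 := by
  intro h
  have h' : ∀ k, ptc i k = 0 := fun k => (phi_eq_zero _).1 (congrFun h k)
  rcases ptc_ne i with h1 | h1 | h1 <;> exact h1 (h' _)

theorem exists_pv (v : Fin 3 → F4) (hv : v ≠ 0) : ∃ c : F4, c ≠ 0 ∧ ∃ i, v = c • pv i := by
  obtain ⟨a, ha⟩ := phi_bij.2 (v 0)
  obtain ⟨b, hb⟩ := phi_bij.2 (v 1)
  obtain ⟨c, hc⟩ := phi_bij.2 (v 2)
  have hne : a ≠ 0 ∨ b ≠ 0 ∨ c ≠ 0 := by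
    by_contra! h
    obtain ⟨rfl, rfl, rfl⟩ := h
    rw [phi_zero] at ha hb hc
    apply hv
    funext k
    fin_cases k
    · exact ha.symm
    · exact hb.symm
    · exact hc.symm
  obtain ⟨s, hs, i, h0, h1, h2⟩ := ptc_normalize a b c hne
  refine ⟨phi s, fun h => hs ((phi_eq_zero s).1 h), i, ?_⟩
  funext k
  fin_cases k
  · change v 0 = phi s * phi (ptc i 0); rw [← phi_mul, ← h0, ha]
  · change v 1 = phi s * phi (ptc i 1); rw [← phi_mul, ← h1, hb]
  · change v 2 = phi s * phi (ptc i 2); rw [← phi_mul, ← h2, hc]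

theorem pv_inj (i j : Fin 21) (c : F4) (h : pv i = c • pv j) : i = j := by
  obtain ⟨s, rfl⟩ := phi_bij.2 c
  have key : ∀ k, ptc i k = mul4 s (ptc j k) := by
    intro k
    apply phi_bij.1
    rw [phi_mul]
    exact congrFun h k
  exact ptc_inj i j s ⟨key 0, key 1, key 2⟩

/-- The `i`-th point. -/
noncomputable def Pt (i : Fin 21) : ProjPt :=
  ⟨Submodule.span F4 {pv i}, finrank_span_singleton (pv_ne i)⟩

theorem Pt_bij : Function.Bijective Pt := by
  constructor
  · intro i j h
    have h1 : Submodule.span F4 {pv i} = Submodule.span F4 {pv j} := congrArg Subtype.val h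
    have h2 : pv i ∈ Submodule.span F4 {pv j} := h1 ▸ Submodule.mem_span_singleton_self _
    obtain ⟨c, hc⟩ := Submodule.mem_span_singleton.1 h2
    exact pv_inj i j c hc.symm
  · rintro ⟨p, hp⟩
    obtain ⟨v, hv0, hv⟩ := finrank_eq_one_iff'.1 hp
    have hv0' : (v : Fin 3 → F4) ≠ 0 := fun h => hv0 (Subtype.ext h)
    obtain ⟨c, hc, i, hi⟩ := exists_pv v hv0'
    refine ⟨i, Subtype.ext ?_⟩
    change Submodule.span F4 {pv i} = p
    have hmem : pv i ∈ p := by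
      have : pv i = c⁻¹ • (v : Fin 3 → F4) := by rw [hi, smul_smul, inv_mul_cancel₀ hc, one_smul]
      rw [this]
      exact p.smul_mem _ v.2
    have : FiniteDimensional F4 p := FiniteDimensional.finiteDimensional_submodule p
    apply Submodule.eq_of_le_of_finrank_eq
    · rw [Submodule.span_singleton_le_iff_mem]; exact hmem
    · rw [finrank_span_singleton (pv_ne i), hp]

/-- The functional dot product with `a`. -/
noncomputable def dotf (a : Fin 3 → F4) : (Fin 3 → F4) →ₗ[F4] F4 where
  toFun v := a 0 * v 0 + a 1 * v 1 + a 2 * v 2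
  map_add' u v := by simp only [Pi.add_apply]; ring
  map_smul' c v := by simp only [Pi.smul_apply, smul_eq_mul, RingHom.id_apply]; ring

theorem dotf_apply (a v : Fin 3 → F4) : dotf a v = a 0 * v 0 + a 1 * v 1 + a 2 * v 2 := rfl

theorem dotf_ne (a : Fin 3 → F4) (ha : a ≠ 0) : dotf a ≠ 0 := by
  intro h
  apply ha
  funext k
  have := LinearMap.congr_fun h (Pi.single k 1)
  fin_cases k <;> simpa [dotf_apply, Pi.single_apply] using this

theorem finrank_ker_dotf (a : Fin 3 → F4) (ha : a ≠ 0) :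
    Module.finrank F4 (LinearMap.ker (dotf a)) = 2 := by
  have h1 := LinearMap.finrank_range_add_finrank_ker (dotf a)
  have h2 : LinearMap.range (dotf a) = ⊤ := LinearMap.range_eq_top.2
    (LinearMap.surjective (dotf_ne a ha))
  rw [h2, finrank_top, Module.finrank_self, Module.finrank_fin_fun] at h1
  omega

/-- The `i`-th line. -/
noncomputable def Ln (i : Fin 21) : ProjLine :=
  ⟨LinearMap.ker (dotf (pv i)), finrank_ker_dotf _ (pv_ne i)⟩

theorem Ln_surj : Function.Surjective Ln := by
  rintro ⟨L, hL⟩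
  have hlt : L < ⊤ := by
    rw [lt_top_iff_ne_top]
    rintro rfl
    rw [finrank_top, Module.finrank_fin_fun] at hL
    omega
  obtain ⟨f, hf, hle⟩ := Submodule.exists_le_ker_of_lt_top L hlt
  have hfd : f = dotf (fun k => f (Pi.single k 1)) := by
    apply LinearMap.pi_ext'
    intro k
    ext
    fin_cases k <;> simp [dotf_apply, Pi.single_apply]
  have ha : (fun k => f (Pi.single k 1)) ≠ 0 := by
    intro h
    apply hf
    rw [hfd, h]
    ext
    simp [dotf_apply]
  obtain ⟨c, hc, i, hi⟩ := exists_pv _ ha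
  refine ⟨i, Subtype.ext ?_⟩
  change LinearMap.ker (dotf (pv i)) = L
  symm
  apply Submodule.eq_of_le_of_finrank_eq
  · intro v hv
    have h1 : f v = 0 := hle hv
    rw [hfd, hi] at h1
    rw [LinearMap.mem_ker]
    have h2 : c * dotf (pv i) v = 0 := by
      rw [← h1]; simp only [dotf_apply, Pi.smul_apply, smul_eq_mul]; ring
    exact (mul_eq_zero.1 h2).resolve_left hc
  · rw [hL, finrank_ker_dotf _ (pv_ne i)]

/-- Incidence is computed by the model. -/
theorem incidence (i j : Fin 21) : (Pt j).val ≤ (Ln i).val ↔ dot4 (ptc i) (ptc j) = 0 := by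
  change Submodule.span F4 {pv j} ≤ LinearMap.ker (dotf (pv i)) ↔ _
  rw [Submodule.span_singleton_le_iff_mem, LinearMap.mem_ker, dotf_apply, ← phi_eq_zero]
  simp only [dot4, phi_add, phi_mul, pv]

/-! ### The code on 21 coordinates -/

/-- Booleans to `ZMod 2`. -/
def bz (b : Bool) : ZMod 2 := if b then 1 else 0

theorem bz_xor : ∀ a b : Bool, bz (a ^^ b) = bz a + bz b := by decide
theorem bz_and : ∀ a b : Bool, bz (a && b) = bz a * bz b := by decide
theorem bz_ne : ∀ a : Bool, bz a ≠ 0 ↔ a = true := by decide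
theorem bz_inj : ∀ a b : Bool, bz a = bz b → a = b := by decide

/-- Incidence matrix. -/
def incM : Matrix (Fin 21) (Fin 21) (ZMod 2) := fun i j => 
  bz (@decide (dot4 (ptc i) (ptc j) = 0) (instDecidableEqFin 4 _ _))

/-- Ten independent lines. -/
def sel : Fin 10 → Fin 21 := ![0, 1, 2, 3, 4, 5, 6, 7, 9, 13]

/-- The ten chosen lines as bit masks. -/
def rowN : Fin 10 → ℕ :=
  ![139810, 481, 1082404, 544816, 329768, 31, 279618, 1118466, 7681, 1966081]

/-- Generator matrix. -/
def genM : Matrix (Fin 10) (Fin 21) (ZMod 2) := fun k j => bz ((rowN k).testBit j)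

/-- Expression of all lines in the ten chosen ones. -/
def msgM : Matrix (Fin 21) (Fin 10) (ZMod 2) := fun i k => bz (((![1, 2, 4, 8, 16, 32, 64, 128,
  254, 256, 376, 436, 466, 512, 620, 696, 714, 829, 841, 913, 1019] : Fin 21 → ℕ) i).testBit k)

/-- Decoding matrix. -/
def decM : Matrix (Fin 21) (Fin 10) (ZMod 2) := fun i k => bz (((![0, 0, 0, 0, 32, 0, 0, 0, 2, 0,
  0, 0, 256, 0, 699, 877, 747, 1, 763, 915, 873] : Fin 21 → ℕ) i).testBit k)

theorem genM_row : ∀ k j, genM k j = incM (sel k) j := by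
  have h : ((List.finRange 10).all fun k => (List.finRange 21).all fun j =>
      decide (genM k j = incM (sel k) j)) = true := by decide +kernel
  simp only [List.all_eq_true, decide_eq_true_eq] at h
  exact fun k j => h k (List.mem_finRange k) j (List.mem_finRange j)

theorem msg_gen : ∀ i j, (msgM * genM) i j = incM i j := by
  have h : ((List.finRange 21).all fun i => (List.finRange 21).all fun j =>
      decide ((msgM * genM) i j = incM i j)) = true := by
    simp only [Matrix.mul_apply, Fin.sum_univ_succ, Fin.sum_univ_zero]
    decide +kernel
  simp only [List.all_eq_true, decide_eq_true_eq] at h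
  exact fun i j => h i (List.mem_finRange i) j (List.mem_finRange j)

theorem gen_dec : genM * decM = 1 := by
  have : ∀ i j, (genM * decM) i j = if i = j then 1 else 0 := by
    simp only [Matrix.mul_apply, Fin.sum_univ_succ, Fin.sum_univ_zero]
    decide +kernel
  ext i j
  rw [this, Matrix.one_apply]

theorem enc_inj : Function.Injective genM.vecMulLinear := by
  intro x y h
  simp only [Matrix.vecMulLinear_apply] at h
  have := congrArg (fun z => Matrix.vecMul z decM) h
  simpa only [Matrix.vecMul_vecMul, gen_dec, Matrix.vecMul_one] using this

theorem enc_range : LinearMap.range genM.vecMulLinear =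
    Submodule.span (ZMod 2) (Set.range incM) := by
  apply le_antisymm
  · rw [range_vecMulLinear]
    apply Submodule.span_le.2
    rintro _ ⟨k, rfl⟩
    apply Submodule.subset_span
    exact ⟨sel k, funext fun j => (genM_row k j).symm⟩
  · apply Submodule.span_le.2
    rintro _ ⟨i, rfl⟩
    exact ⟨msgM i, funext fun j => msg_gen i j⟩

/-- Points are indexed by `Fin 21`. -/
noncomputable def ptE : Fin 21 ≃ ProjPt := Equiv.ofBijective Pt Pt_bij

/-- Transport of words. -/
noncomputable def wordE : (ProjPt → ZMod 2) ≃ₗ[ZMod 2] (Fin 21 → ZMod 2) :=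
  LinearEquiv.funCongrLeft (ZMod 2) (ZMod 2) ptE

theorem wordE_line (i : Fin 21) : wordE (lineWord (Ln i)) = incM i := by
  funext j
  change (if (Pt j).val ≤ (Ln i).val then (1 : ZMod 2) else 0) = _
  simp only [incidence, incM, bz, decide_eq_true_eq]

/-- The encoder. -/
noncomputable def encS : (Fin 10 → ZMod 2) →ₗ[ZMod 2] (ProjPt → ZMod 2) :=
  wordE.symm.toLinearMap ∘ₗ genM.vecMulLinear

theorem encS_inj : Function.Injective encS := by
  intro x y h
  exact enc_inj (wordE.symm.injective h)

theorem encS_range : LinearMap.range encS = Hcode := by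
  have h1 : Set.range lineWord = wordE.symm.toLinearMap '' Set.range incM := by
    ext w
    constructor
    · rintro ⟨l, rfl⟩
      obtain ⟨i, rfl⟩ := Ln_surj l
      refine ⟨incM i, ⟨i, rfl⟩, ?_⟩
      rw [← wordE_line]
      exact wordE.symm_apply_apply _
    · rintro ⟨_, ⟨i, rfl⟩, rfl⟩
      refine ⟨Ln i, ?_⟩
      rw [← wordE_line]
      exact (wordE.symm_apply_apply _).symm
  rw [encS, LinearMap.range_comp, enc_range, Submodule.map_span, ← h1, Hcode]

theorem wtS_eq (w : ProjPt → ZMod 2) : wtS w = Nat.card {j : Fin 21 // wordE w j ≠ 0} := by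
  unfold wtS
  exact Nat.card_congr (ptE.subtypeEquiv (fun _ => Iff.rfl)).symm

/-! ### Enumeration of the 1024 codewords -/

/-- Bits of a number below 1024. -/
def bitsV (n : Fin 1024) : Fin 10 → ZMod 2 := fun k => bz (n.val.testBit k)

theorem bitsV_bij : Function.Bijective bitsV := by
  rw [Fintype.bijective_iff_injective_and_card]
  refine ⟨?_, by simp [ZMod.card]⟩
  intro m n h
  apply Fin.ext
  apply Nat.eq_of_testBit_eq
  intro i
  by_cases hi : i < 10
  · exact bz_inj _ _ (congrFun h ⟨i, hi⟩)
  · have hp : 1024 ≤ 2 ^ i := by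
      calc 1024 = 2 ^ 10 := by norm_num
        _ ≤ 2 ^ i := Nat.pow_le_pow_right (by norm_num) (by omega)
    rw [Nat.testBit_lt_two_pow (lt_of_lt_of_le m.2 hp),
      Nat.testBit_lt_two_pow (lt_of_lt_of_le n.2 hp)]

/-- A masked row. -/
def maskN (n k r : ℕ) : ℕ := bif n.testBit k then r else 0

theorem testBit_maskN (n k r j : ℕ) : (maskN n k r).testBit j = (n.testBit k && r.testBit j) := by
  unfold maskN
  cases n.testBit k <;> simp

/-- The codeword number `n` as a bit mask. -/
def cwN (n : ℕ) : ℕ :=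
  maskN n 0 139810 ^^^ (maskN n 1 481 ^^^ (maskN n 2 1082404 ^^^ (maskN n 3 544816 ^^^
  (maskN n 4 329768 ^^^ (maskN n 5 31 ^^^ (maskN n 6 279618 ^^^ (maskN n 7 1118466 ^^^
  (maskN n 8 7681 ^^^ maskN n 9 1966081))))))))

theorem enc_bits (n : Fin 1024) (j : Fin 21) :
    genM.vecMulLinear (bitsV n) j = bz ((cwN n).testBit j) := by
  simp only [cwN, Nat.testBit_xor, testBit_maskN, bz_xor, bz_and]
  rw [Matrix.vecMulLinear_apply]
  change ∑ k, bitsV n k * genM k j = _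
  simp only [Fin.sum_univ_succ, Fin.sum_univ_zero, add_zero]
  rfl

/-- Number of ones among the lowest `t` bits. -/
def popN : ℕ → ℕ → ℕ
  | 0, _ => 0
  | t + 1, x => x % 2 + popN t (x / 2)

theorem popN_eq (t x : ℕ) : Nat.card {j : Fin t // x.testBit j = true} = popN t x := by
  rw [Nat.card_eq_fintype_card, Fintype.card_subtype]
  induction t generalizing x with
  | zero => simp [popN]
  | succ t ih =>
    rw [Fin.card_filter_univ_succ, popN, ← ih (x / 2)]
    simp only [Fin.val_zero, Function.comp_def, Fin.val_succ, Nat.testBit_succ, Nat.testBit_zero,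
      decide_eq_true_eq]
    rcases Nat.mod_two_eq_zero_or_one x with h | h <;> simp [h, add_comm]

/-- Weight of codeword number `n`. -/
def wtN (n : ℕ) : ℕ := popN 21 (cwN n)

theorem wtS_enc (n : Fin 1024) : wtS (encS (bitsV n)) = wtN n := by
  rw [wtS_eq, wtN, ← popN_eq]
  apply Nat.card_congr
  apply Equiv.subtypeEquivRight
  intro j
  have : wordE (encS (bitsV n)) = genM.vecMulLinear (bitsV n) := wordE.apply_symm_apply _
  rw [this, enc_bits, bz_ne]

/-- Codewords are indexed by `Fin 1024`. -/
noncomputable def codeE : Fin 1024 ≃ ↥Hcode :=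
  (Equiv.ofBijective bitsV bitsV_bij).trans
    ((LinearEquiv.ofInjective encS encS_inj).toEquiv.trans
      (LinearEquiv.ofEq _ _ encS_range).toEquiv)

theorem codeE_val (n : Fin 1024) : (codeE n).val = encS (bitsV n) := rfl

/-- Counting function. -/
def cntN (f : ℕ → ℕ) (c : ℕ) : ℕ → ℕ
  | 0 => 0
  | t + 1 => (bif Nat.beq (f t) c then 1 else 0) + cntN f c t

theorem cntN_eq (f : ℕ → ℕ) (c t : ℕ) : Nat.card {n : Fin t // f n = c} = cntN f c t := by
  rw [Nat.card_eq_fintype_card, Fintype.card_subtype]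
  induction t with
  | zero => simp [cntN]
  | succ t ih =>
    rw [cntN, ← ih, Fin.univ_castSuccEmb, Finset.filter_cons]
    have hb : Nat.beq (f t) c = decide (f t = c) := by
      rw [Bool.eq_iff_iff, Nat.beq_eq, decide_eq_true_eq]
    rw [hb]
    by_cases h : f t = c
    · simp [h, Finset.filter_map, Function.comp_def, add_comm]
      congr!
    · simp [h, Finset.filter_map, Function.comp_def]
      congr!

theorem card_wt (c : ℕ) : Nat.card {w : ↥Hcode // wtS w.val = c} = cntN wtN c 1024 := by
  rw [← cntN_eq]
  apply Nat.card_congr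
  apply Equiv.symm
  apply codeE.subtypeEquiv
  intro n
  rw [codeE_val, wtS_enc]

theorem wt_all : ∀ n : Fin 1024, wtN n ∈ [0, 5, 8, 9, 12, 13, 16, 21] := by decide +kernel

theorem wtS_line (l : ProjLine) : wtS (lineWord l) = 5 := by
  obtain ⟨i, rfl⟩ := Ln_surj l
  rw [wtS_eq, wordE_line]
  have h : ∀ i : Fin 21, (Finset.univ.filter
      (fun j => dot4 (ptc i) (ptc j) = 0)).card = 5 := by decide +kernel
  rw [← h i, ← Fintype.card_subtype, ← Nat.card_eq_fintype_card]
  apply Nat.card_congr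
  apply Equiv.subtypeEquivRight
  intro j
  rw [incM, bz_ne, decide_eq_true_eq]

/-- `H` is generated by the 21 line words (each of weight 5),
has dimension 10, and weight distribution `0¹ 5²¹ 8²¹⁰ 9²⁸⁰ 12²⁸⁰ 13²¹⁰ 16²¹ 21¹`. -/
theorem Hcode_dim_and_weights :
    Nat.card ProjPt = 21 ∧
    (∀ l : ProjLine, wtS (lineWord l) = 5) ∧
    Module.finrank (ZMod 2) ↥Hcode = 10 ∧
    (∀ w ∈ Hcode, wtS w ∈ ({0, 5, 8, 9, 12, 13, 16, 21} : Set ℕ)) ∧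
    Nat.card {w : ↥Hcode // wtS w.val = 0} = 1 ∧
    Nat.card {w : ↥Hcode // wtS w.val = 5} = 21 ∧
    Nat.card {w : ↥Hcode // wtS w.val = 8} = 210 ∧
    Nat.card {w : ↥Hcode // wtS w.val = 9} = 280 ∧
    Nat.card {w : ↥Hcode // wtS w.val = 12} = 280 ∧
    Nat.card {w : ↥Hcode // wtS w.val = 13} = 210 ∧
    Nat.card {w : ↥Hcode // wtS w.val = 16} = 21 ∧
    Nat.card {w : ↥Hcode // wtS w.val = 21} = 1 := by 
  refine ⟨?_, wtS_line, ?_, ?_, ?_, ?_, ?_, ?_, ?_, ?_, ?_, ?_⟩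
  · rw [← Nat.card_congr ptE]; simp
  · rw [← encS_range, LinearMap.finrank_range_of_inj encS_inj, Module.finrank_fin_fun]
  · intro w hw
    obtain ⟨n, hn⟩ := codeE.surjective ⟨w, hw⟩
    have h1 : w = encS (bitsV n) := by rw [← codeE_val, hn]
    rw [h1, wtS_enc]
    have := wt_all n
    simpa using this
  all_goals rw [card_wt]; decide +kernel
end
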